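/- Let d ≥ 1 be an integer and let α ≥ 1 − d/4. Then there exists δ > 0, depending only on d and α, such that for every n ∈ ℤ^d and every t with 0 < t ≤ δ / ⟨n⟩, the partial sums S_N := ∑_{k ∈ ℤ^d, |k| ≤ N} ∫₀^t (sin((t − t₁)⟨n⟩) / ⟨n⟩) ∫₀^{t₁} (sin((t − t₂)⟨n⟩) / ⟨n⟩) σ_k(t₁, t₂) σ_{n−k}(t₁, t₂) dt₂ dt₁ tend to +∞ as N → ∞. (This is the deterministic divergence underlying Proposition 1.3: the variance of the Fourier coefficients of the second-order stochastic object for the wave equation diverges when α ≥ 1 − d/4; in particular on 𝕋², i.e. d = 2, divergence holds for all α ≥ 1/2.) -/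

import Mathlib

/-!
Write `p = ⟨n⟩`, `a = ⟨k⟩`, `b = ⟨n - k⟩`. Then `σ_k σ_{n-k} = (ab)^{2α-2}` times a product of
profiles whose leading part is `t₂²/4 · cos((t₁-t₂)a) cos((t₁-t₂)b)`, that is, `t₂²/8` times the
sum of the cosines of the slow phase `(t₁-t₂)(a-b)` and of the fast phase `(t₁-t₂)(a+b)`.
Since `|a - b| ≤ p` and `t ≤ 1/p` (so that `δ = 1` works), the slow phase stays in `[-1, 1]` and
its cosine is at least `1/2`, while the Duhamel kernels are nonnegative. The fast phase is
`O(1/(a+b))` after one integration by parts in `t₂` (`abs_integral_fast_le`), and the remaining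
terms are `O(1/a + 1/b)`. Hence the time integral is at least `c (ab)^{2α-2}` with
`c = c(n, t) > 0` for all but finitely many `k` (`double_integral_ge`).

For `α ≥ 1 - d/4` this dominates a multiple of `⟨k⟩^{-d}` (`size_ge`), which is not summable over
`ℤ^d` (`not_summable_jb`). The comparison is made term by term because for large `α` the error
terms are not summable either.
-/

/-- Japanese bracket `⟨n⟩ = (1 + |n|²)^{1/2}` for `n ∈ ℤ^d`. -/
noncomputable def jb (d : ℕ) (n : Fin d → ℤ) : ℝ :=
  Real.sqrt (1 + ∑ i, ((n i : ℝ)) ^ 2)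

/-- Euclidean norm `|n|` for `n ∈ ℤ^d`. -/
noncomputable def znorm (d : ℕ) (n : Fin d → ℤ) : ℝ :=
  Real.sqrt (∑ i, ((n i : ℝ)) ^ 2)

/-- The wave covariance function `σ_m(t₁, t₂)` on `𝕋^d`. -/
noncomputable def sigmaW (d : ℕ) (α : ℝ) (m : Fin d → ℤ) (t₁ t₂ : ℝ) : ℝ :=
  Real.cos ((t₁ - t₂) * jb d m) / (2 * jb d m ^ (2 * (1 - α))) * t₂
    + Real.sin ((t₁ - t₂) * jb d m) / (4 * jb d m ^ (3 - 2 * α))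
    - Real.sin ((t₁ + t₂) * jb d m) / (4 * jb d m ^ (3 - 2 * α))

/-! ### Time integrals at fixed frequencies -/

/-- The wave covariance `σ_m` with the size `⟨m⟩^{2α-2}` factored out, as a function of the
frequency `a = ⟨m⟩` alone. -/
noncomputable def waveProfile (a t₁ t₂ : ℝ) : ℝ :=
  Real.cos ((t₁ - t₂) * a) / 2 * t₂ + Real.sin ((t₁ - t₂) * a) / (4 * a)
    - Real.sin ((t₁ + t₂) * a) / (4 * a)

/-- The Duhamel kernel `sin((t - u)p) / p` of the wave equation at frequency `p`. -/
noncomputable def waveKernel (p t u : ℝ) : ℝ := Real.sin ((t - u) * p) / p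

@[fun_prop]
lemma continuous_waveKernel (p t : ℝ) : Continuous (waveKernel p t) := by
  unfold waveKernel; fun_prop

lemma waveKernel_nonneg {p t u : ℝ} (hp : 1 ≤ p) (htp : t * p ≤ 1) (hu0 : 0 ≤ u) (hut : u ≤ t) :
    0 ≤ waveKernel p t u := by
  unfold waveKernel
  apply div_nonneg _ (by linarith)
  apply Real.sin_nonneg_of_nonneg_of_le_pi
  · exact mul_nonneg (by linarith) (by linarith)
  · nlinarith [Real.pi_gt_three, mul_nonneg hu0 (by linarith : (0 : ℝ) ≤ p)]

lemma waveKernel_pos {p t u : ℝ} (hp : 1 ≤ p) (htp : t * p ≤ 1) (hu0 : 0 ≤ u) (hut : u < t) :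
    0 < waveKernel p t u := by
  unfold waveKernel
  apply div_pos _ (by linarith)
  apply Real.sin_pos_of_pos_of_lt_pi
  · exact mul_pos (by linarith) (by linarith)
  · nlinarith [Real.pi_gt_three, mul_nonneg hu0 (by linarith : (0 : ℝ) ≤ p)]

lemma abs_waveKernel_le_one {p t u : ℝ} (hp : 1 ≤ p) : |waveKernel p t u| ≤ 1 := by
  unfold waveKernel
  rw [abs_div, abs_of_pos (by linarith : 0 < p), div_le_one (by linarith)]
  exact (Real.abs_sin_le_one _).trans hp

/-- The slow phase `a - b` keeps its cosine above `1/2` on the time scale `1/p`, so the diagonal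
part of the product contributes at least `t₂²/16`; the fast phase `a + b` is kept exactly, and
everything else is of lower order in the frequencies. -/
lemma waveProfile_mul_ge {p a b t₁ t₂ : ℝ} (ha : 1 ≤ a) (hb : 1 ≤ b) (hp : 1 ≤ p)
    (hab : |a - b| ≤ p) (h0 : 0 ≤ t₂) (h12 : t₂ ≤ t₁) (h1p : t₁ * p ≤ 1) :
    t₂ ^ 2 / 16 + t₂ ^ 2 / 8 * Real.cos ((t₁ - t₂) * (a + b)) - (1 / a + 1 / b)
      ≤ waveProfile a t₁ t₂ * waveProfile b t₁ t₂ := by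
  have h2 : t₂ ≤ 1 := by nlinarith
  have hslow : 1 / 2 ≤ Real.cos ((t₁ - t₂) * (a - b)) := by
    have hle : |(t₁ - t₂) * (a - b)| ≤ 1 := by
      rw [abs_mul, abs_of_nonneg (by linarith : 0 ≤ t₁ - t₂)]
      nlinarith [abs_nonneg (a - b)]
    have h3 := Real.one_sub_sq_div_two_le_cos (x := (t₁ - t₂) * (a - b))
    have h4 : ((t₁ - t₂) * (a - b)) ^ 2 ≤ 1 := by
      rw [← sq_abs]; exact pow_le_one₀ (abs_nonneg _) hle
    linarith
  have hprod : Real.cos ((t₁ - t₂) * a) * Real.cos ((t₁ - t₂) * b)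
      = (Real.cos ((t₁ - t₂) * (a - b)) + Real.cos ((t₁ - t₂) * (a + b))) / 2 := by
    rw [mul_sub, mul_add, Real.cos_sub, Real.cos_add]; ring
  have hsmall : ∀ c : ℝ, 1 ≤ c →
      |Real.sin ((t₁ - t₂) * c) / (4 * c) - Real.sin ((t₁ + t₂) * c) / (4 * c)|
        ≤ 1 / c / 2 := by
    intro c hc
    rw [← sub_div, abs_div, abs_of_pos (by linarith : 0 < 4 * c), div_div,
      div_le_div_iff₀ (by linarith) (by linarith)]
    have := abs_sub (Real.sin ((t₁ - t₂) * c)) (Real.sin ((t₁ + t₂) * c))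
    have h5 := Real.abs_sin_le_one ((t₁ - t₂) * c)
    have h6 := Real.abs_sin_le_one ((t₁ + t₂) * c)
    nlinarith
  have he := hsmall a ha
  have hf := hsmall b hb
  have ex : waveProfile a t₁ t₂ = Real.cos ((t₁ - t₂) * a) * (t₂ / 2) +
      (Real.sin ((t₁ - t₂) * a) / (4 * a) - Real.sin ((t₁ + t₂) * a) / (4 * a)) := by
    unfold waveProfile; ring
  have ey : waveProfile b t₁ t₂ = Real.cos ((t₁ - t₂) * b) * (t₂ / 2) +
      (Real.sin ((t₁ - t₂) * b) / (4 * b) - Real.sin ((t₁ + t₂) * b) / (4 * b)) := by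
    unfold waveProfile; ring
  rw [ex, ey]
  set e := Real.sin ((t₁ - t₂) * a) / (4 * a) - Real.sin ((t₁ + t₂) * a) / (4 * a)
  set f := Real.sin ((t₁ - t₂) * b) / (4 * b) - Real.sin ((t₁ + t₂) * b) / (4 * b)
  have hx := Real.abs_cos_le_one ((t₁ - t₂) * a)
  have hy := Real.abs_cos_le_one ((t₁ - t₂) * b)
  set x := Real.cos ((t₁ - t₂) * a)
  set y := Real.cos ((t₁ - t₂) * b)
  have hia : 0 < 1 / a := by positivity
  have hib : 0 < 1 / b := by positivity
  have hib1 : 1 / b ≤ 1 := by rw [div_le_one (by linarith)]; exact hb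
  have hX : |t₂ / 2| ≤ 1 / 2 := by rw [abs_of_nonneg (by linarith)]; linarith
  have r1 : |x * (t₂ / 2) * f| ≤ 1 * (1 / 2) * (1 / b / 2) := by
    rw [abs_mul, abs_mul]; gcongr
  have r2 : |y * (t₂ / 2) * e| ≤ 1 * (1 / 2) * (1 / a / 2) := by
    rw [abs_mul, abs_mul]; gcongr
  have r3 : |e * f| ≤ (1 / a / 2) * (1 / 2) := by
    rw [abs_mul]; gcongr; linarith
  have q1 := neg_abs_le (x * (t₂ / 2) * f)
  have q2 := neg_abs_le (y * (t₂ / 2) * e)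
  have q3 := neg_abs_le (e * f)
  have : (x * (t₂ / 2) + e) * (y * (t₂ / 2) + f) = (x * y) * (t₂ ^ 2 / 4)
      + x * (t₂ / 2) * f + y * (t₂ / 2) * e + e * f := by ring
  rw [this, hprod]
  nlinarith [mul_le_mul_of_nonneg_right hslow (sq_nonneg t₂)]

/-- One integration by parts gains the factor `1/w`; the boundary terms vanish, since `u²`
vanishes at `0` and `sin((t₁ - u)w)` at `t₁`. -/
lemma abs_integral_fast_le {p t t₁ w : ℝ} (hp : 1 ≤ p) (h0 : 0 ≤ t₁) (h1 : t₁ ≤ 1) (hw : 0 < w) :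
    |∫ u in (0 : ℝ)..t₁, waveKernel p t u * u ^ 2 * Real.cos ((t₁ - u) * w)| ≤ 3 / w := by
  have hp0 : p ≠ 0 := by linarith
  have hu : ∀ x ∈ Set.uIcc 0 t₁, HasDerivAt (fun u => waveKernel p t u * u ^ 2)
      (-Real.cos ((t - x) * p) * x ^ 2 + waveKernel p t x * (2 * x)) x := by
    intro x _
    have hk : HasDerivAt (waveKernel p t) (-Real.cos ((t - x) * p)) x := by
      have := ((((hasDerivAt_id' x).const_sub t).mul_const p).sin).div_const p
      exact this.congr_deriv (by field_simp)
    have := hk.mul (hasDerivAt_pow 2 x)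
    exact this.congr_deriv (by simp)
  have hv : ∀ x ∈ Set.uIcc 0 t₁, HasDerivAt (fun u => -Real.sin ((t₁ - u) * w) / w)
      (Real.cos ((t₁ - x) * w)) x := by
    intro x _
    have := (((((hasDerivAt_id' x).const_sub t₁).mul_const w).sin).neg).div_const w
    exact this.congr_deriv (by field_simp)
  have key := intervalIntegral.integral_mul_deriv_eq_deriv_mul hu hv
    (Continuous.intervalIntegrable (by fun_prop) _ _)
    (Continuous.intervalIntegrable (by fun_prop) _ _)
  rw [key]
  simp only [sub_self, zero_mul, Real.sin_zero, neg_zero, zero_div, mul_zero, ne_eq,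
    OfNat.ofNat_ne_zero, not_false_eq_true, zero_pow, zero_sub, abs_neg]
  rw [← Real.norm_eq_abs]
  refine (intervalIntegral.norm_integral_le_of_norm_le_const (C := 3 / w) ?_).trans ?_
  · intro x hx
    rw [Set.uIoc_of_le h0] at hx
    have hx0 : 0 ≤ x := hx.1.le
    have hx1 : x ≤ 1 := hx.2.trans h1
    rw [Real.norm_eq_abs, abs_mul, abs_div, abs_neg, abs_of_pos hw, ← mul_div_assoc]
    gcongr
    have b1 : |-Real.cos ((t - x) * p) * x ^ 2| ≤ 1 * 1 := by
      rw [abs_mul, abs_neg, abs_of_nonneg (sq_nonneg x)]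
      exact mul_le_mul (Real.abs_cos_le_one _) (pow_le_one₀ hx0 hx1) (sq_nonneg x) one_pos.le
    have b2 : |waveKernel p t x * (2 * x)| ≤ 1 * 2 := by
      rw [abs_mul, abs_of_nonneg (by linarith : 0 ≤ 2 * x)]
      exact mul_le_mul (abs_waveKernel_le_one hp) (by linarith) (by linarith) one_pos.le
    have b3 := abs_add_le (-Real.cos ((t - x) * p) * x ^ 2) (waveKernel p t x * (2 * x))
    have b4 := Real.abs_sin_le_one ((t₁ - x) * w)
    calc _ ≤ 3 * (1 : ℝ) := mul_le_mul (by linarith) b4 (abs_nonneg _) (by norm_num)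
      _ = 3 := by ring
  · rw [sub_zero, abs_of_nonneg h0]
    have : 0 < 3 / w := by positivity
    nlinarith

lemma inner_integral_ge {p t a b t₁ : ℝ} (ha : 1 ≤ a) (hb : 1 ≤ b) (hp : 1 ≤ p)
    (hab : |a - b| ≤ p) (h0 : 0 ≤ t₁) (h1t : t₁ ≤ t) (htp : t * p ≤ 1) :
    (∫ u in (0 : ℝ)..t₁, waveKernel p t u * u ^ 2) / 16 - 2 * (1 / a + 1 / b)
      ≤ ∫ u in (0 : ℝ)..t₁, waveKernel p t u * (waveProfile a t₁ u * waveProfile b t₁ u) := by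
  have h1p : t₁ * p ≤ 1 := by nlinarith
  have h11 : t₁ ≤ 1 := by nlinarith
  have hia : 0 < 1 / a := by positivity
  have hib : 0 < 1 / b := by positivity
  have hfast := abs_integral_fast_le (t := t) hp h0 h11 (by linarith : 0 < a + b)
  have hle : 3 / (a + b) ≤ 3 * (1 / a) := by
    rw [← mul_div_assoc, mul_one]
    exact div_le_div_of_nonneg_left (by norm_num) (by linarith) (by linarith)
  have hmono : (∫ u in (0 : ℝ)..t₁, (waveKernel p t u * u ^ 2 / 16
      + waveKernel p t u * u ^ 2 * Real.cos ((t₁ - u) * (a + b)) / 8 - (1 / a + 1 / b)))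
      ≤ ∫ u in (0 : ℝ)..t₁, waveKernel p t u * (waveProfile a t₁ u * waveProfile b t₁ u) := by
    apply intervalIntegral.integral_mono_on h0
    · exact Continuous.intervalIntegrable (by fun_prop) _ _
    · exact Continuous.intervalIntegrable (by unfold waveProfile; fun_prop) _ _
    · intro u hu
      have hs0 := waveKernel_nonneg hp htp hu.1 (hu.2.trans h1t)
      have hs1 := (le_abs_self _).trans (abs_waveKernel_le_one (t := t) (u := u) hp)
      have := waveProfile_mul_ge ha hb hp hab hu.1 hu.2 h1p
      nlinarith [mul_le_mul_of_nonneg_left this hs0]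
  rw [intervalIntegral.integral_sub, intervalIntegral.integral_add,
    intervalIntegral.integral_div, intervalIntegral.integral_div,
    intervalIntegral.integral_const, smul_eq_mul, sub_zero] at hmono
  · have q := (abs_le.mp hfast).1
    nlinarith
  all_goals exact Continuous.intervalIntegrable (by fun_prop) _ _

/-- The double time integral is bounded below by a positive constant depending only on `p, t`,
uniformly in the frequencies `a, b`, up to an error that vanishes as `a, b → ∞`. -/
lemma double_integral_ge {p t : ℝ} (hp : 1 ≤ p) (ht : 0 < t) (htp : t * p ≤ 1) :
    ∃ c > 0, ∀ a b : ℝ, 1 ≤ a → 1 ≤ b → |a - b| ≤ p →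
      c - 2 * (1 / a + 1 / b) ≤ ∫ t₁ in (0 : ℝ)..t, waveKernel p t t₁ *
        ∫ u in (0 : ℝ)..t₁, waveKernel p t u * (waveProfile a t₁ u * waveProfile b t₁ u) := by
  have ht1 : t ≤ 1 := by nlinarith
  have hJ : Continuous fun t₁ => ∫ u in (0 : ℝ)..t₁, waveKernel p t u * u ^ 2 :=
    intervalIntegral.continuous_primitive
      (fun _ _ => Continuous.intervalIntegrable (by fun_prop) _ _) 0
  refine ⟨∫ t₁ in (0 : ℝ)..t, waveKernel p t t₁ *
      ((∫ u in (0 : ℝ)..t₁, waveKernel p t u * u ^ 2) / 16), ?_, ?_⟩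
  · apply intervalIntegral.intervalIntegral_pos_of_pos_on _ _ ht
    · exact Continuous.intervalIntegrable (by fun_prop) _ _
    · intro x hx
      refine mul_pos (waveKernel_pos hp htp hx.1.le hx.2) (div_pos ?_ (by norm_num))
      apply intervalIntegral.intervalIntegral_pos_of_pos_on _ _ hx.1
      · exact Continuous.intervalIntegrable (by fun_prop) _ _
      · intro u hu
        exact mul_pos (waveKernel_pos hp htp hu.1.le (hu.2.trans hx.2)) (pow_pos hu.1 2)
  · intro a b ha hb hab
    have hia : 0 < 1 / a := by positivity
    have hib : 0 < 1 / b := by positivity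
    have hmono : (∫ t₁ in (0 : ℝ)..t, (waveKernel p t t₁ *
        ((∫ u in (0 : ℝ)..t₁, waveKernel p t u * u ^ 2) / 16) - 2 * (1 / a + 1 / b)))
        ≤ ∫ t₁ in (0 : ℝ)..t, waveKernel p t t₁ *
        ∫ u in (0 : ℝ)..t₁, waveKernel p t u * (waveProfile a t₁ u * waveProfile b t₁ u) := by
      apply intervalIntegral.integral_mono_on ht.le
      · exact Continuous.intervalIntegrable (by fun_prop) _ _
      · apply Continuous.intervalIntegrable
        refine (continuous_waveKernel p t).mul ?_
        apply intervalIntegral.continuous_parametric_intervalIntegral_of_continuous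
          (s := fun x : ℝ => x) _ continuous_id
        unfold waveProfile waveKernel Function.uncurry
        fun_prop
      · intro x hx
        have hs0 := waveKernel_nonneg hp htp hx.1 hx.2
        have hs1 := (le_abs_self _).trans (abs_waveKernel_le_one (t := t) (u := x) hp)
        have := inner_integral_ge ha hb hp hab hx.1 hx.2 htp
        nlinarith [mul_le_mul_of_nonneg_left this hs0]
    rw [intervalIntegral.integral_sub, intervalIntegral.integral_const, smul_eq_mul,
      sub_zero] at hmono
    · nlinarith
    all_goals exact Continuous.intervalIntegrable (by fun_prop) _ _

/-! ### The bracket on the lattice -/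

lemma one_le_jb (d : ℕ) (n : Fin d → ℤ) : 1 ≤ jb d n := by
  unfold jb
  rw [Real.one_le_sqrt]
  have : 0 ≤ ∑ i, ((n i : ℝ)) ^ 2 := Finset.sum_nonneg fun _ _ => sq_nonneg _
  linarith

lemma abs_le_jb (d : ℕ) (n : Fin d → ℤ) (i : Fin d) : |(n i : ℝ)| ≤ jb d n := by
  unfold jb
  apply Real.abs_le_sqrt
  have := Finset.single_le_sum (f := fun i => ((n i : ℝ)) ^ 2) (fun _ _ => sq_nonneg _)
    (Finset.mem_univ i)
  linarith

lemma finite_jb_le (d : ℕ) (M : ℝ) : {k : Fin d → ℤ | jb d k ≤ M}.Finite := by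
  apply (Set.finite_Icc (fun _ : Fin d => -⌊M⌋) (fun _ => ⌊M⌋)).subset
  intro k hk
  have h : ∀ i, |k i| ≤ ⌊M⌋ := fun i => by
    rw [Int.le_floor]; push_cast; exact (abs_le_jb d k i).trans hk
  exact ⟨fun i => (abs_le.mp (h i)).1, fun i => (abs_le.mp (h i)).2⟩

/-- Subadditivity of the bracket; after squaring this is Cauchy–Schwarz. -/
lemma jb_add_le (d : ℕ) (k m n : Fin d → ℤ) (h : k = m + n) : jb d k ≤ jb d m + jb d n := by
  have hn0 : 0 ≤ jb d m := by linarith [one_le_jb d m]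
  have e : ∀ k : Fin d → ℤ, jb d k ^ 2 = 1 + ∑ i, ((k i : ℝ)) ^ 2 := fun k => by
    unfold jb
    exact Real.sq_sqrt (add_nonneg one_pos.le (Finset.sum_nonneg fun _ _ => sq_nonneg _))
  have cs : ∑ i, (m i : ℝ) * n i ≤ jb d m * jb d n := by
    have := Finset.sum_mul_sq_le_sq_mul_sq Finset.univ (fun i => (m i : ℝ)) (fun i => (n i : ℝ))
    refine (le_abs_self _).trans (abs_le_of_sq_le_sq ?_ (mul_nonneg hn0 (by linarith [one_le_jb d n])))
    rw [mul_pow, e, e]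
    refine this.trans ?_
    gcongr <;> linarith
  refine (le_abs_self _).trans (abs_le_of_sq_le_sq ?_ (add_nonneg hn0 (by linarith [one_le_jb d n])))
  have : ∑ i, ((k i : ℝ)) ^ 2 = ∑ i, (m i : ℝ) ^ 2 + 2 * ∑ i, (m i : ℝ) * n i
      + ∑ i, (n i : ℝ) ^ 2 := by
    rw [Finset.mul_sum, ← Finset.sum_add_distrib, ← Finset.sum_add_distrib]
    refine Finset.sum_congr rfl fun i _ => ?_
    rw [h, Pi.add_apply]; push_cast; ring
  rw [add_sq, e, e, e, this]
  linarith

lemma jb_neg (d : ℕ) (n : Fin d → ℤ) : jb d (-n) = jb d n := by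
  simp [jb]

lemma abs_jb_sub_le (d : ℕ) (n k : Fin d → ℤ) : |jb d k - jb d (n - k)| ≤ jb d n := by
  rw [abs_le]
  constructor
  · have := jb_add_le d (n - k) n (-k) (by abel)
    rw [jb_neg] at this; linarith
  · have := jb_add_le d k n (-(n - k)) (by abel)
    rw [jb_neg] at this; linarith

/-- The boxes `(R, 2R]^d` escape every finite set and each carries a mass bounded below, so the
Cauchy criterion fails. -/
lemma not_summable_jb (d : ℕ) (hd : 1 ≤ d) :
    ¬ Summable fun k : Fin d → ℤ => jb d k ^ (-(d : ℝ)) := by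
  intro hs
  have hC : 0 < (1 + 4 * d : ℝ) ^ (-(d : ℝ) / 2) := by positivity
  obtain ⟨s, hs⟩ := summable_iff_vanishing_norm.mp hs _ hC
  -- `R` dominates the first coordinate of every element of `s`.
  obtain ⟨M, hM⟩ := (s.image fun k => k ⟨0, hd⟩).bddAbove
  set R : ℕ := M.toNat + 1 with hR
  have hMR : M < (R : ℤ) := by omega
  set box := Finset.Icc (fun _ : Fin d => (R : ℤ) + 1) (fun _ => 2 * (R : ℤ)) with hbox
  have hdisj : Disjoint box s := by
    rw [Finset.disjoint_left]
    intro k hk hks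
    have h1 : k ⟨0, hd⟩ ≤ M := hM (by
      simp only [Finset.coe_image]; exact ⟨k, hks, rfl⟩)
    have h2 := (Finset.mem_Icc.mp hk).1 ⟨0, hd⟩
    simp only at h2
    omega
  have hlt := hs box hdisj
  have hR0 : (0 : ℝ) < R := by rw [hR]; positivity
  have hR1 : (1 : ℝ) ≤ R := by rw [hR]; push_cast; linarith [Nat.cast_nonneg (α := ℝ) M.toNat]
  have hcard : (box.card : ℝ) = (R : ℝ) ^ (d : ℝ) := by
    rw [hbox, Pi.card_Icc]
    simp only [Int.card_Icc, Finset.prod_const, Finset.card_univ, Fintype.card_fin,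
      Real.rpow_natCast]
    rw [show (2 * (R : ℤ) + 1 - (R + 1)).toNat = R by omega]
    push_cast; rfl
  have hterm : ∀ k ∈ box, (1 + 4 * d : ℝ) ^ (-(d : ℝ) / 2) * (R : ℝ) ^ (-(d : ℝ))
      ≤ jb d k ^ (-(d : ℝ)) := by
    intro k hk
    have hk' := Finset.mem_Icc.mp hk
    have hle : jb d k ≤ Real.sqrt (1 + 4 * d) * R := by
      unfold jb
      rw [← Real.sqrt_sq hR0.le, ← Real.sqrt_mul (by positivity)]
      apply Real.sqrt_le_sqrt
      have : ∑ i, ((k i : ℝ)) ^ 2 ≤ ∑ _i : Fin d, (2 * (R : ℝ)) ^ 2 := by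
        apply Finset.sum_le_sum
        intro i _
        have l : (R : ℤ) + 1 ≤ k i := hk'.1 i
        have u : k i ≤ 2 * (R : ℤ) := hk'.2 i
        have l' : (0 : ℝ) ≤ k i := by exact_mod_cast (by omega : (0 : ℤ) ≤ k i)
        have u' : (k i : ℝ) ≤ 2 * R := by exact_mod_cast u
        gcongr
      rw [Finset.sum_const, Finset.card_univ, Fintype.card_fin, nsmul_eq_mul] at this
      nlinarith
    have h := Real.rpow_le_rpow_of_nonpos (z := -(d : ℝ)) (by linarith [one_le_jb d k]) hle
      (by simp)
    refine le_trans (le_of_eq ?_) h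
    rw [Real.mul_rpow (Real.sqrt_nonneg _) hR0.le, Real.sqrt_eq_rpow, ← Real.rpow_mul (by positivity)]
    ring_nf
  have hsum := Finset.card_nsmul_le_sum box _ _ hterm
  rw [nsmul_eq_mul, hcard, mul_left_comm, ← Real.rpow_add hR0, add_neg_cancel, Real.rpow_zero,
    mul_one] at hsum
  exact absurd (hsum.trans (le_abs_self _)) (not_le.mpr hlt)

/-! ### Size of the terms and divergence of the sums -/

lemma sigmaW_eq (d : ℕ) (α : ℝ) (m : Fin d → ℤ) (t₁ t₂ : ℝ) :
    sigmaW d α m t₁ t₂ = jb d m ^ (2 * α - 2) * waveProfile (jb d m) t₁ t₂ := by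
  have h0 : 0 < jb d m := by linarith [one_le_jb d m]
  have h1 : jb d m ^ (2 * (1 - α)) = (jb d m ^ (2 * α - 2))⁻¹ := by
    rw [← Real.rpow_neg h0.le]; ring_nf
  have h2 : jb d m ^ (3 - 2 * α) = (jb d m ^ (2 * α - 2))⁻¹ * jb d m := by
    rw [← Real.rpow_neg h0.le, ← Real.rpow_add_one h0.ne']; ring_nf
  have h3 : jb d m ^ (2 * α - 2) ≠ 0 := (Real.rpow_pos_of_pos h0 _).ne'
  unfold sigmaW waveProfile
  rw [h1, h2]
  field_simp

/-- For `α ≥ 1 - d/4` the size of the `k`-th term dominates a multiple of `⟨k⟩^{-d}`, by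
`⟨n - k⟩ ≤ (1 + ⟨n⟩)⟨k⟩`. -/
lemma size_ge (d : ℕ) (α : ℝ) (hα : 1 - (d : ℝ) / 4 ≤ α) (n k : Fin d → ℤ) :
    (1 + jb d n) ^ (-(d : ℝ) / 2) * jb d k ^ (-(d : ℝ))
      ≤ jb d k ^ (2 * α - 2) * jb d (n - k) ^ (2 * α - 2) := by
  have hn := one_le_jb d n
  have hk := one_le_jb d k
  have hnk := one_le_jb d (n - k)
  have hle : jb d k * jb d (n - k) ≤ (1 + jb d n) * jb d k ^ 2 := by
    have := (abs_le.mp (abs_jb_sub_le d n k)).1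
    nlinarith [mul_nonneg (sub_nonneg.mpr hk) (by linarith : (0:ℝ) ≤ jb d n)]
  rw [← Real.mul_rpow (by linarith) (by linarith)]
  have h1 : (jb d k * jb d (n - k)) ^ (-(d : ℝ) / 2) ≤ (jb d k * jb d (n - k)) ^ (2 * α - 2) :=
    Real.rpow_le_rpow_of_exponent_le (by nlinarith) (by linarith)
  have h2 := Real.rpow_le_rpow_of_nonpos (z := -(d : ℝ) / 2) (by nlinarith) hle
    (by have : (0 : ℝ) ≤ d := Nat.cast_nonneg d
        linarith)
  refine le_trans (le_of_eq ?_) (h2.trans h1)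
  rw [Real.mul_rpow (by linarith) (by positivity), ← Real.rpow_natCast, ← Real.rpow_mul (by linarith)]
  congr 2
  push_cast; ring

/-- A real family that eventually dominates a nonnegative non-summable one has partial sums
tending to `+∞` along every exhaustion by finite sets. -/
lemma tendsto_tsum_indicator {ι : Type*} (f g : ι → ℝ) (hg : ∀ i, 0 ≤ g i) (hns : ¬ Summable g)
    (hfg : ∀ᶠ i in Filter.cofinite, g i ≤ f i) (S : ℕ → Set ι) (hS : ∀ N, (S N).Finite)
    (hex : ∀ i, ∀ᶠ N in Filter.atTop, i ∈ S N) :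
    Filter.Tendsto (fun N => ∑' i, (S N).indicator f i) Filter.atTop Filter.atTop := by
  classical
  have hT : {i | ¬ g i ≤ f i}.Finite := hfg
  set T := hT.toFinset
  rw [Filter.tendsto_atTop]
  intro B
  obtain ⟨u, hu⟩ : ∃ u : Finset ι, B + ∑ i ∈ T, |f i - g i| < ∑ i ∈ u, g i := by
    by_contra! h
    exact hns (summable_of_sum_le hg h)
  have hev : ∀ᶠ N in Filter.atTop, ∀ i ∈ u, i ∈ S N := by
    rw [Filter.eventually_all_finset]
    exact fun i _ => hex i
  filter_upwards [hev] with N hN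
  have hts : ∑' i, (S N).indicator f i = ∑ i ∈ (hS N).toFinset, f i := by
    rw [tsum_eq_sum (s := (hS N).toFinset)]
    · exact Finset.sum_congr rfl fun i hi => Set.indicator_of_mem (by simpa using hi) f
    · exact fun i hi => Set.indicator_of_notMem (by simpa using hi) f
  rw [hts]
  have h1 : ∑ i ∈ u, g i ≤ ∑ i ∈ (hS N).toFinset, g i :=
    Finset.sum_le_sum_of_subset_of_nonneg (fun i hi => by simpa using hN i hi) fun i _ _ => hg i
  -- Replacing `f` by `g` costs at most the finitely many terms of `T`.
  have h2 : ∑ i ∈ (hS N).toFinset, (g i - f i) ≤ ∑ i ∈ T, |f i - g i| := by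
    calc ∑ i ∈ (hS N).toFinset, (g i - f i)
        ≤ ∑ i ∈ (hS N).toFinset, if i ∈ T then |f i - g i| else 0 := by
          refine Finset.sum_le_sum fun i _ => ?_
          split_ifs with h
          · rw [abs_sub_comm]; exact le_abs_self _
          · have : g i ≤ f i := by simpa [T] using h
            linarith
      _ = ∑ i ∈ (hS N).toFinset ∩ T, |f i - g i| := by rw [Finset.sum_ite_mem]
      _ ≤ _ := Finset.sum_le_sum_of_subset_of_nonneg Finset.inter_subset_right
          fun i _ _ => abs_nonneg _
  rw [Finset.sum_sub_distrib] at h2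
  linarith

/-- Divergence underlying Proposition 1.3: the variance of the Fourier coefficients of the
second-order wave object diverges when `α ≥ 1 - d/4`. -/
theorem stmt4 (d : ℕ) (hd : 1 ≤ d) (α : ℝ) (hα : 1 - (d : ℝ) / 4 ≤ α) :
    ∃ δ > 0, ∀ n : Fin d → ℤ, ∀ t : ℝ, 0 < t → t ≤ δ / jb d n →
      Filter.Tendsto
        (fun N : ℕ => ∑' k : Fin d → ℤ,
          Set.indicator {m : Fin d → ℤ | znorm d m ≤ N}
            (fun k => ∫ t₁ in (0 : ℝ)..t, (Real.sin ((t - t₁) * jb d n) / jb d n) *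
              ∫ t₂ in (0 : ℝ)..t₁, (Real.sin ((t - t₂) * jb d n) / jb d n) *
                (sigmaW d α k t₁ t₂ * sigmaW d α (n - k) t₁ t₂)) k)
        Filter.atTop Filter.atTop := by
  refine ⟨1, one_pos, fun n t ht htn => ?_⟩
  have hp := one_le_jb d n
  have htp : t * jb d n ≤ 1 := by rwa [le_div_iff₀ (by linarith)] at htn
  obtain ⟨c, hc, hmain⟩ := double_integral_ge hp ht htp
  have hK : 0 < c / 2 * (1 + jb d n) ^ (-(d : ℝ) / 2) := by positivity
  apply tendsto_tsum_indicator _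
    (fun k => c / 2 * (1 + jb d n) ^ (-(d : ℝ) / 2) * jb d k ^ (-(d : ℝ)))
  · intro k
    have := one_le_jb d k
    positivity
  · rw [summable_mul_left_iff hK.ne']
    exact not_summable_jb d hd
  · -- Beyond this radius both `⟨k⟩` and `⟨n - k⟩` exceed `8 / c`.
    refine (finite_jb_le d (8 / c + jb d n)).subset fun k hk => ?_
    by_contra hfar
    apply hk
    simp only [Set.mem_ofPred_eq, not_le] at hfar
    have hk1 := one_le_jb d k
    have hnk1 := one_le_jb d (n - k)
    have hdiff := abs_jb_sub_le d n k
    have h8 : 0 < 8 / c := by positivity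
    have hka : 8 / c ≤ jb d k := by linarith
    have hkb : 8 / c ≤ jb d (n - k) := by linarith [(abs_le.mp hdiff).2]
    have inv : ∀ x : ℝ, 8 / c ≤ x → 1 / x ≤ c / 8 := fun x hx => by
      have := one_div_le_one_div_of_le h8 hx
      rwa [one_div_div] at this
    have hI := hmain _ _ hk1 hnk1 hdiff
    have hI' : c / 2 ≤ _ := le_trans (by linarith [inv _ hka, inv _ hkb]) hI
    have hsize := size_ge d α hα n k
    have hfactor : (∫ t₁ in (0 : ℝ)..t, (Real.sin ((t - t₁) * jb d n) / jb d n) *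
        ∫ t₂ in (0 : ℝ)..t₁, (Real.sin ((t - t₂) * jb d n) / jb d n) *
          (sigmaW d α k t₁ t₂ * sigmaW d α (n - k) t₁ t₂))
        = (jb d k ^ (2 * α - 2) * jb d (n - k) ^ (2 * α - 2)) *
          ∫ t₁ in (0 : ℝ)..t, waveKernel (jb d n) t t₁ *
            ∫ u in (0 : ℝ)..t₁, waveKernel (jb d n) t u *
              (waveProfile (jb d k) t₁ u * waveProfile (jb d (n - k)) t₁ u) := by
      rw [← intervalIntegral.integral_const_mul]
      congr 1; funext t₁
      unfold waveKernel
      rw [mul_left_comm]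
      congr 1
      rw [← intervalIntegral.integral_const_mul]
      congr 1; funext u
      rw [sigmaW_eq, sigmaW_eq]; ring
    rw [Set.mem_ofPred_eq, hfactor]
    have hpos : 0 ≤ jb d k ^ (2 * α - 2) * jb d (n - k) ^ (2 * α - 2) := by positivity
    calc _ = ((1 + jb d n) ^ (-(d : ℝ) / 2) * jb d k ^ (-(d : ℝ))) * (c / 2) := by ring
      _ ≤ _ := mul_le_mul hsize hI' (by positivity) hpos
  · intro N
    refine (finite_jb_le d (1 + N)).subset fun k hk => ?_
    have hk' : Real.sqrt (∑ i, ((k i : ℝ)) ^ 2) ≤ N := hk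
    have h0 : 0 ≤ ∑ i, ((k i : ℝ)) ^ 2 := Finset.sum_nonneg fun _ _ => sq_nonneg _
    have hsq := Real.sqrt_le_left (Nat.cast_nonneg (α := ℝ) N) |>.mp hk'
    simp only [Set.mem_ofPred_eq, jb]
    rw [Real.sqrt_le_left (by positivity)]
    nlinarith [Nat.cast_nonneg (α := ℝ) N]
  · intro k
    filter_upwards [Filter.eventually_ge_atTop ⌈znorm d k⌉₊] with N hN
    exact Nat.ceil_le.mp hN
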